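/- arXiv:1501.05070 — 2 statements merged into one kernel-verified Lean document; each statement's English description precedes it below -/
import Mathlib

section
/- The function f(x) = ((x/sin x)^2 - x·cot x)/(1 - x·cot x) is strictly increasing on (0, π/2), with limit 2 as x → 0+ and limit π²/4 as x → π/2−. -/
open Real Set Filter Topology

noncomputable def f3 (x : ℝ) : ℝ :=
  ((x / Real.sin x) ^ 2 - x * (Real.cos x / Real.sin x)) /
    (1 - x * (Real.cos x / Real.sin x))

/-!
Write `s = sin x`, `c = cos x`, `A = x - s c` and `B = s - x c`. Clearing denominators gives
`f3 = x A / (s B)`. Since `A' = 2 s ^ 2` and `B' = x s`, the sign of `f3'` is that of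
`P = 2 x B ^ 2 - (x ^ 2 - s ^ 2) A`. As `P` vanishes at `0` and `P' = 4 s (s ^ 3 - x ^ 3 c)`,
monotonicity reduces to the Mitrinović–Adamović inequality `cos x < (sin x / x) ^ 3`, which follows
from Taylor bounds. The limit at `0` comes from `A' / B' = 2 s / x`.
-/

lemma lt_of_hasDerivAt_pos {f f' : ℝ → ℝ} {a b : ℝ} (hab : a < b)
    (hcont : ContinuousOn f (Icc a b)) (hderiv : ∀ x ∈ Ioo a b, HasDerivAt f (f' x) x)
    (hpos : ∀ x ∈ Ioo a b, 0 < f' x) : f a < f b := by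
  obtain ⟨c, hc, hslope⟩ := exists_hasDerivAt_eq_slope f f' hab hcont hderiv
  have hquot : 0 < (f b - f a) / (b - a) := hslope ▸ hpos c hc
  exact sub_pos.1 ((div_pos_iff_of_pos_right (sub_pos.2 hab)).1 hquot)

lemma cos_lt_one_sub_sq_div_two_add_pow_four_div {x : ℝ} (hx : x ≠ 0) :
    cos x < 1 - x ^ 2 / 2 + x ^ 4 / 24 := by
  wlog hx_pos : 0 < x generalizing x
  · have hneg := this (neg_ne_zero.2 hx) (neg_pos.2 (hx.lt_of_le (not_lt.1 hx_pos)))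
    simpa only [cos_neg, even_two.neg_pow, (by decide : Even 4).neg_pow] using hneg
  have hderiv (y : ℝ) : HasDerivAt (fun y ↦ 1 - y ^ 2 / 2 + y ^ 4 / 24 - cos y)
      (sin y - (y - y ^ 3 / 6)) y := by
    refine HasDerivAt.congr_deriv ((((hasDerivAt_pow 2 y).div_const 2).const_sub 1).add
      ((hasDerivAt_pow 4 y).div_const 24) |>.sub (hasDerivAt_cos y)) ?_
    push_cast
    ring
  have hlt := lt_of_hasDerivAt_pos hx_pos (by fun_prop) (fun y _ ↦ hderiv y)
    fun y hy ↦ sub_pos.2 (sin_gt_sub_cube hy.1)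
  simp only [cos_zero] at hlt
  linarith

lemma pow_three_mul_cos_lt_sin_pow_three {x : ℝ} (hx : x ∈ Ioo 0 π) :
    x ^ 3 * cos x < sin x ^ 3 := by
  have hx_pos : 0 < x := hx.1
  rcases le_or_gt (π / 2) x with hx_ge | hx_lt
  · calc x ^ 3 * cos x ≤ 0 := mul_nonpos_of_nonneg_of_nonpos (by positivity)
          (cos_nonpos_of_pi_div_two_le_of_le hx_ge (by linarith [hx.2, pi_pos]))
      _ < sin x ^ 3 := pow_pos (sin_pos_of_mem_Ioo hx) 3
  · have hsq : x ^ 2 < 4 := by nlinarith [pi_lt_four]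
    have hdiff : 0 < x ^ 7 * (9 - x ^ 2) / 216 := by
      have : 0 < 9 - x ^ 2 := by linarith
      positivity
    have hsin_lower : 0 ≤ x - x ^ 3 / 6 := by nlinarith
    calc x ^ 3 * cos x < x ^ 3 * (1 - x ^ 2 / 2 + x ^ 4 / 24) := by
          gcongr
          exact cos_lt_one_sub_sq_div_two_add_pow_four_div hx_pos.ne'
      _ < x ^ 3 * (1 - x ^ 2 / 2 + x ^ 4 / 24) + x ^ 7 * (9 - x ^ 2) / 216 :=
          lt_add_of_pos_right _ hdiff
      _ = (x - x ^ 3 / 6) ^ 3 := by ring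
      _ < sin x ^ 3 := by
          gcongr
          exact sin_gt_sub_cube hx_pos

lemma hasDerivAt_sub_sin_mul_cos (x : ℝ) :
    HasDerivAt (fun y ↦ y - sin y * cos y) (2 * sin x ^ 2) x := by
  refine HasDerivAt.congr_deriv
    ((hasDerivAt_id' x).sub ((hasDerivAt_sin x).mul (hasDerivAt_cos x))) ?_
  linear_combination -sin_sq_add_cos_sq x

lemma hasDerivAt_sin_sub_mul_cos (x : ℝ) :
    HasDerivAt (fun y ↦ sin y - y * cos y) (x * sin x) x := by
  refine HasDerivAt.congr_deriv
    ((hasDerivAt_sin x).sub ((hasDerivAt_id' x).mul (hasDerivAt_cos x))) ?_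
  ring

lemma sin_sub_mul_cos_pos {x : ℝ} (hx : x ∈ Ioo 0 π) : 0 < sin x - x * cos x := by
  have hlt := lt_of_hasDerivAt_pos hx.1 (by fun_prop) (fun y _ ↦ hasDerivAt_sin_sub_mul_cos y)
    fun y hy ↦ mul_pos hy.1 (sin_pos_of_pos_of_lt_pi hy.1 (hy.2.trans hx.2))
  simpa only [sin_zero, zero_mul, sub_zero] using hlt

/-- The numerator of the derivative of `f3`, whose denominator is
`(sin x * (sin x - x * cos x)) ^ 2`. -/
noncomputable def f3DerivNum (x : ℝ) : ℝ :=
  2 * x * (sin x - x * cos x) ^ 2 - (x ^ 2 - sin x ^ 2) * (x - sin x * cos x)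

lemma hasDerivAt_f3DerivNum (x : ℝ) :
    HasDerivAt f3DerivNum (4 * sin x * (sin x ^ 3 - x ^ 3 * cos x)) x := by
  refine HasDerivAt.congr_deriv
    ((((hasDerivAt_id' x).const_mul 2).mul ((hasDerivAt_sin_sub_mul_cos x).pow 2)).sub
      (((hasDerivAt_pow 2 x).sub ((hasDerivAt_sin x).pow 2)).mul
        (hasDerivAt_sub_sin_mul_cos x))) ?_
  push_cast
  simp only [Pi.sub_apply, Pi.pow_apply]
  linear_combination 2 * (x ^ 2 - sin x ^ 2) * sin_sq_add_cos_sq x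

lemma f3DerivNum_pos {x : ℝ} (hx : x ∈ Ioo 0 π) : 0 < f3DerivNum x := by
  have hderiv_pos (y : ℝ) (hy : y ∈ Ioo 0 x) :
      0 < 4 * sin y * (sin y ^ 3 - y ^ 3 * cos y) := by
    have hy_mem : y ∈ Ioo 0 π := Ioo_subset_Ioo_right hx.2.le hy
    exact mul_pos (mul_pos four_pos (sin_pos_of_mem_Ioo hy_mem))
      (sub_pos.2 (pow_three_mul_cos_lt_sin_pow_three hy_mem))
  calc 0 = f3DerivNum 0 := by simp [f3DerivNum]
    _ < f3DerivNum x := lt_of_hasDerivAt_pos hx.1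
      (fun y _ ↦ (hasDerivAt_f3DerivNum y).continuousAt.continuousWithinAt)
      (fun y _ ↦ hasDerivAt_f3DerivNum y) hderiv_pos

-- Where `sin x = 0` both sides are `0`, by division by zero.
lemma f3_eq_div (x : ℝ) :
    f3 x = x * (x - sin x * cos x) / (sin x * (sin x - x * cos x)) := by
  by_cases hs : sin x = 0
  · simp [f3, hs]
  · rw [f3, ← mul_div_mul_left _ _ (pow_ne_zero 2 hs)]
    congr 1 <;> field_simp

lemma hasDerivAt_f3 {x : ℝ} (hx : sin x * (sin x - x * cos x) ≠ 0) :
    HasDerivAt f3 (f3DerivNum x / (sin x * (sin x - x * cos x)) ^ 2) x := by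
  rw [funext f3_eq_div]
  refine HasDerivAt.congr_deriv
    (((hasDerivAt_id' x).mul (hasDerivAt_sub_sin_mul_cos x)).div
      ((hasDerivAt_sin x).mul (hasDerivAt_sin_sub_mul_cos x)) hx) ?_
  rw [f3DerivNum]
  congr 1
  simp only [Pi.mul_apply]
  linear_combination x * (sin x * (sin x - x * cos x) - (x ^ 2 - sin x ^ 2)) *
    sin_sq_add_cos_sq x

lemma strictMonoOn_f3 : StrictMonoOn f3 (Ioo 0 π) := by
  have hden {x : ℝ} (hx : x ∈ Ioo 0 π) : 0 < sin x * (sin x - x * cos x) :=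
    mul_pos (sin_pos_of_mem_Ioo hx) (sin_sub_mul_cos_pos hx)
  have hderiv (x : ℝ) (hx : x ∈ Ioo 0 π) := hasDerivAt_f3 (hden hx).ne'
  refine strictMonoOn_of_deriv_pos (convex_Ioo 0 π)
    (fun x hx ↦ (hderiv x hx).continuousAt.continuousWithinAt) fun x hx ↦ ?_
  rw [interior_Ioo] at hx
  rw [(hderiv x hx).deriv]
  exact div_pos (f3DerivNum_pos hx) (pow_pos (hden hx) 2)

lemma tendsto_sin_div_self_nhdsNE_zero : Tendsto (fun x ↦ sin x / x) (𝓝[≠] 0) (𝓝 1) := by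
  have hsinc : Tendsto sinc (𝓝[≠] 0) (𝓝 1) :=
    (continuous_sinc.tendsto' 0 1 sinc_zero).mono_left nhdsWithin_le_nhds
  exact hsinc.congr' (eventually_nhdsWithin_of_forall fun x hx ↦ sinc_of_ne_zero hx)

lemma eventually_sin_ne_zero_nhdsNE_zero : ∀ᶠ x in 𝓝[≠] 0, sin x ≠ 0 :=
  (tendsto_sin_div_self_nhdsNE_zero.eventually_ne one_ne_zero).mono
    fun _ hx ↦ (div_ne_zero_iff.1 hx).1

lemma tendsto_sub_sin_mul_cos_div_sin_sub_mul_cos :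
    Tendsto (fun x ↦ (x - sin x * cos x) / (sin x - x * cos x)) (𝓝[≠] 0) (𝓝 2) := by
  refine HasDerivAt.lhopital_zero_nhdsNE (.of_forall hasDerivAt_sub_sin_mul_cos)
    (.of_forall hasDerivAt_sin_sub_mul_cos) ?_ ?_ ?_ ?_
  · filter_upwards [self_mem_nhdsWithin, eventually_sin_ne_zero_nhdsNE_zero] with x hx hs
    exact mul_ne_zero hx hs
  · exact (Continuous.tendsto' (by fun_prop) _ _ (by simp)).mono_left nhdsWithin_le_nhds
  · exact (Continuous.tendsto' (by fun_prop) _ _ (by simp)).mono_left nhdsWithin_le_nhds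
  · have hratio : Tendsto (fun x ↦ 2 * (sin x / x)) (𝓝[≠] 0) (𝓝 2) := by
      simpa only [mul_one] using tendsto_sin_div_self_nhdsNE_zero.const_mul 2
    refine hratio.congr' ?_
    filter_upwards [self_mem_nhdsWithin, eventually_sin_ne_zero_nhdsNE_zero] with x hx hs
    have hx_ne : x ≠ 0 := hx
    field_simp

lemma tendsto_f3_nhdsNE_zero : Tendsto f3 (𝓝[≠] 0) (𝓝 2) := by
  have hprod := (tendsto_sin_div_self_nhdsNE_zero.inv₀ one_ne_zero).mul
    tendsto_sub_sin_mul_cos_div_sin_sub_mul_cos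
  rw [inv_one, one_mul] at hprod
  refine hprod.congr fun x ↦ ?_
  rw [f3_eq_div, inv_div, div_mul_div_comm]

lemma tendsto_f3_nhds_pi_div_two : Tendsto f3 (𝓝 (π / 2)) (𝓝 (π ^ 2 / 4)) := by
  have hcont : ContinuousAt f3 (π / 2) := by
    unfold f3
    fun_prop (disch := simp)
  have hval : f3 (π / 2) = π ^ 2 / 4 := by
    rw [f3, sin_pi_div_two, cos_pi_div_two]
    ring
  exact hval ▸ hcont.tendsto

theorem stmt3_general :
    StrictMonoOn f3 (Ioo 0 π) ∧ Tendsto f3 (𝓝[≠] 0) (𝓝 2) ∧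
      Tendsto f3 (𝓝 (π / 2)) (𝓝 (π ^ 2 / 4)) :=
  ⟨strictMonoOn_f3, tendsto_f3_nhdsNE_zero, tendsto_f3_nhds_pi_div_two⟩

theorem stmt3 :
    StrictMonoOn f3 (Ioo 0 (π / 2)) ∧
    Filter.Tendsto f3 (nhdsWithin 0 (Ioi 0)) (nhds 2) ∧
    Filter.Tendsto f3 (nhdsWithin (π / 2) (Iio (π / 2))) (nhds (π ^ 2 / 4)) :=
  let ⟨hmono, hzero, hpi⟩ := stmt3_general
  ⟨hmono.mono (Ioo_subset_Ioo_right (half_le_self pi_pos.le)),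
    hzero.mono_left (nhdsGT_le_nhdsNE 0), hpi.mono_left nhdsWithin_le_nhds⟩
end

section
/- For all x with 0 < |x| ≤ π/2, one has (α - 1)·(x/sin x) + x/tan x ≤ α where α = π/(π-2), and α is the best possible constant. -/
open Real

/-! Both terms on the left are even in `x`, and for `0 < x < π` clearing denominators turns the
inequality into `α ≤ x (1 - cos x) / (x - sin x)`. This quotient is decreasing on `(0, 2π)`: the
ratio of the derivatives of its numerator and denominator is `1 + x sin x / (1 - cos x)`, whose
derivative `(sin x - x) / (1 - cos x)` is negative, and the monotone form of l'Hôpital's rule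
passes this on to the quotient. So the binding constraint is the one at the right endpoint of the
interval, which at `x = π / 2` reads `α ≤ π / (π - 2)`.
-/

lemma exists_sub_eq_deriv_div_deriv_mul_sub {f g f' g' : ℝ → ℝ} {a b : ℝ} (hab : a < b)
    (hfc : ContinuousOn f (Set.Icc a b)) (hgc : ContinuousOn g (Set.Icc a b))
    (hf : ∀ x ∈ Set.Ioo a b, HasDerivAt f (f' x) x)
    (hg : ∀ x ∈ Set.Ioo a b, HasDerivAt g (g' x) x)
    (hg' : ∀ x ∈ Set.Ioo a b, g' x ≠ 0) :
    ∃ c ∈ Set.Ioo a b, f b - f a = f' c / g' c * (g b - g a) := by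
  obtain ⟨c, hc, hslope⟩ := exists_ratio_hasDerivAt_eq_ratio_slope f f' hab hfc hf g g' hgc hg
  refine ⟨c, hc, ?_⟩
  rw [div_mul_eq_mul_div, eq_div_iff (hg' c hc), ← hslope, mul_comm]

lemma antitoneOn_sub_div_sub_of_antitoneOn_deriv_div {f g f' g' : ℝ → ℝ} {a b : ℝ}
    (hfc : ContinuousOn f (Set.Icc a b)) (hgc : ContinuousOn g (Set.Icc a b))
    (hf : ∀ x ∈ Set.Ioo a b, HasDerivAt f (f' x) x)
    (hg : ∀ x ∈ Set.Ioo a b, HasDerivAt g (g' x) x)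
    (hg' : ∀ x ∈ Set.Ioo a b, 0 < g' x)
    (hanti : AntitoneOn (fun x => f' x / g' x) (Set.Ioo a b)) :
    AntitoneOn (fun x => (f x - f a) / (g x - g a)) (Set.Ioc a b) := by
  have hmono : StrictMonoOn g (Set.Icc a b) := by
    refine strictMonoOn_of_deriv_pos (convex_Icc a b) hgc fun x hx => ?_
    rw [interior_Icc] at hx
    exact (hg x hx).deriv ▸ hg' x hx
  have cauchy {p q : ℝ} (hap : a ≤ p) (hpq : p < q) (hqb : q ≤ b) :
      ∃ c ∈ Set.Ioo p q, f q - f p = f' c / g' c * (g q - g p) := by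
    have hIoo : Set.Ioo p q ⊆ Set.Ioo a b := Set.Ioo_subset_Ioo hap hqb
    exact exists_sub_eq_deriv_div_deriv_mul_sub hpq
      (hfc.mono (Set.Icc_subset_Icc hap hqb)) (hgc.mono (Set.Icc_subset_Icc hap hqb))
      (fun x hx => hf x (hIoo hx)) (fun x hx => hg x (hIoo hx)) fun x hx => (hg' x (hIoo hx)).ne'
  rintro x ⟨hax, hxb⟩ y ⟨hay, hyb⟩ hxy
  rcases hxy.eq_or_lt with rfl | hlt
  · exact le_rfl
  obtain ⟨c, ⟨hac, hcx⟩, hc⟩ := cauchy le_rfl hax hxb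
  obtain ⟨d, ⟨hxd, hdy⟩, hd⟩ := cauchy hax.le hlt hyb
  have hgax : 0 < g x - g a := sub_pos.2 (hmono ⟨le_rfl, hax.le.trans hxb⟩ ⟨hax.le, hxb⟩ hax)
  have hgxy : 0 < g y - g x := sub_pos.2 (hmono ⟨hax.le, hxb⟩ ⟨hay.le, hyb⟩ hlt)
  have hdc : f' d / g' d ≤ f' c / g' c :=
    hanti ⟨hac, hcx.trans_le hxb⟩ ⟨hax.trans hxd, hdy.trans_le hyb⟩ (hcx.trans hxd).le
  simp only [hc, mul_div_cancel_right₀ _ hgax.ne']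
  rw [div_le_iff₀ (by linarith)]
  calc f y - f a = f' d / g' d * (g y - g x) + f' c / g' c * (g x - g a) := by
        rw [← hc, ← hd]; ring
    _ ≤ f' c / g' c * (g y - g x) + f' c / g' c * (g x - g a) := by gcongr
    _ = f' c / g' c * (g y - g a) := by ring

lemma one_sub_cos_pos {x : ℝ} (hx : x ∈ Set.Ioo 0 (2 * π)) : 0 < 1 - cos x := by
  refine sub_pos.2 ((cos_le_one x).lt_of_ne fun h => hx.1.ne' ?_)
  exact (cos_eq_one_iff_of_lt_of_lt (by linarith [hx.1, pi_pos]) hx.2).1 h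

lemma hasDerivAt_mul_sin_div_one_sub_cos {x : ℝ} (hx : 1 - cos x ≠ 0) :
    HasDerivAt (fun x => x * sin x / (1 - cos x)) ((sin x - x) / (1 - cos x)) x := by
  refine (((hasDerivAt_id' x).fun_mul (hasDerivAt_sin x)).div
    ((hasDerivAt_cos x).const_sub 1) hx).congr_deriv ?_
  field_simp
  linear_combination -x * sin_sq_add_cos_sq x

lemma antitoneOn_mul_sin_div_one_sub_cos :
    AntitoneOn (fun x => x * sin x / (1 - cos x)) (Set.Ioo 0 (2 * π)) := by
  have hderiv {x : ℝ} (hx : x ∈ Set.Ioo 0 (2 * π)) :=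
    hasDerivAt_mul_sin_div_one_sub_cos (one_sub_cos_pos hx).ne'
  refine antitoneOn_of_hasDerivWithinAt_nonpos (convex_Ioo 0 (2 * π))
    (fun x hx => (hderiv hx).continuousAt.continuousWithinAt)
    (fun x hx => (hderiv (interior_subset hx)).hasDerivWithinAt) fun x hx => ?_
  rw [interior_Ioo] at hx
  exact div_nonpos_of_nonpos_of_nonneg (sub_nonpos.2 (sin_lt hx.1).le) (one_sub_cos_pos hx).le

lemma antitoneOn_mul_one_sub_cos_div_sub_sin :
    AntitoneOn (fun x => x * (1 - cos x) / (x - sin x)) (Set.Ioc 0 (2 * π)) := by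
  have hnum (x : ℝ) :
      HasDerivAt (fun x => x * (1 - cos x)) (1 - cos x + x * sin x) x := by
    simpa using (hasDerivAt_id' x).fun_mul ((hasDerivAt_cos x).const_sub 1)
  have hden (x : ℝ) : HasDerivAt (fun x => x - sin x) (1 - cos x) x :=
    (hasDerivAt_id' x).sub (hasDerivAt_sin x)
  have hratio : AntitoneOn (fun x => (1 - cos x + x * sin x) / (1 - cos x))
      (Set.Ioo 0 (2 * π)) := by
    refine (antitoneOn_mul_sin_div_one_sub_cos.const_add 1).congr fun x hx => ?_
    simp only [add_div, div_self (one_sub_cos_pos hx).ne']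
  simpa using antitoneOn_sub_div_sub_of_antitoneOn_deriv_div (by fun_prop) (by fun_prop)
    (fun x _ => hnum x) (fun x _ => hden x) (fun _ => one_sub_cos_pos) hratio

lemma sub_one_mul_div_sin_add_div_tan_le_iff {α x : ℝ} (hx0 : 0 < x) (hxπ : x < π) :
    (α - 1) * (x / sin x) + x / tan x ≤ α ↔ α ≤ x * (1 - cos x) / (x - sin x) := by
  have hsin : 0 < sin x := sin_pos_of_pos_of_lt_pi hx0 hxπ
  -- At `x = π / 2` the junk values `tan x = 0` and `x / 0 = 0` agree with `x cos x / sin x = 0`.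
  have hform : (α - 1) * (x / sin x) + x / tan x = ((α - 1) * x + x * cos x) / sin x := by
    rw [tan_eq_sin_div_cos, div_div_eq_mul_div]
    ring
  rw [hform, div_le_iff₀ hsin, le_div_iff₀ (sub_pos.2 (sin_lt hx0))]
  constructor <;> intro h <;> linarith

lemma abs_div_apply_abs_of_odd {K : Type*} [DivisionRing K] [LinearOrder K] {f : K → K}
    (hf : Function.Odd f) (x : K) : |x| / f |x| = x / f x := by
  rcases abs_choice x with h | h <;> simp only [h, hf x, neg_div_neg_eq]

theorem stmt4_general {b : ℝ} (hb0 : 0 < b) (hbπ : b < π) (α : ℝ) :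
    (∀ x : ℝ, 0 < |x| → |x| ≤ b → (α - 1) * (x / sin x) + x / tan x ≤ α) ↔
      α ≤ b * (1 - cos b) / (b - sin b) := by
  have habs : |b| = b := abs_of_pos hb0
  refine ⟨fun h => ?_, fun hα x hx0 hxb => ?_⟩
  · exact (sub_one_mul_div_sin_add_div_tan_le_iff hb0 hbπ).1 (h b (by rwa [habs]) habs.le)
  · rw [← abs_div_apply_abs_of_odd sin_neg, ← abs_div_apply_abs_of_odd tan_neg,
      sub_one_mul_div_sin_add_div_tan_le_iff hx0 (hxb.trans_lt hbπ)]
    exact hα.trans (antitoneOn_mul_one_sub_cos_div_sub_sin ⟨hx0, by linarith⟩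
      ⟨hb0, by linarith⟩ hxb)

lemma pi_div_two_mul_one_sub_cos_div_sub_sin :
    π / 2 * (1 - cos (π / 2)) / (π / 2 - sin (π / 2)) = π / (π - 2) := by
  rw [cos_pi_div_two, sin_pi_div_two, sub_zero, mul_one, div_sub_one two_ne_zero,
    div_div_div_cancel_right₀ two_ne_zero]

theorem stmt4 :
    (∀ x : ℝ, 0 < |x| → |x| ≤ π / 2 →
      (π / (π - 2) - 1) * (x / Real.sin x) + x / Real.tan x ≤ π / (π - 2)) ∧
    (∀ α : ℝ,
      (∀ x : ℝ, 0 < |x| → |x| ≤ π / 2 →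
        (α - 1) * (x / Real.sin x) + x / Real.tan x ≤ α) → α ≤ π / (π - 2)) := by
  have h := stmt4_general pi_div_two_pos (half_lt_self pi_pos)
  rw [pi_div_two_mul_one_sub_cos_div_sub_sin] at h
  exact ⟨(h _).2 le_rfl, fun α => (h α).1⟩
end
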